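/- In the walk (OTW) model, the probability of a contact above the axis at site 2i is ⟨â_i⟩_n = (z₁z₂)^i Z̃_i(z₁) Z_{n-i}(z₁,z₂)/Z_n(z₁,z₂), and in the thermodynamic limit with i = xn, 0 < x < 1, the pair (⟨â_x⟩, ⟨b̂_x⟩) of contact probabilities above/below converges to (0,0) when z₁,z₂ > 1/2, to (ρ(z₁),0) when z₁ < 1/2 < z₂ (z₂ > z₁), and to (0,ρ(z₂)) when z₂ < 1/2, z₁ > z₂, where ρ(z) = (1-2z)/(1-z). -/

import Mathlib

open Filter

/-- Ballot number B_{m,q}, with B_{0,0} = 1 and B_{m,q} = 0 for q > m. -/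
noncomputable def Bq (m q : ℕ) : ℝ :=
  if m = 0 then (if q = 0 then 1 else 0)
  else if q ≤ m then
    (q : ℝ) * (2 * m - q - 1).factorial / ((m.factorial : ℝ) * (m - q).factorial)
  else 0

/-- One-sided contact generating function Z̃_m(z) = ∑_q B_{m,q} z^{-q}. -/
noncomputable def Zt (m : ℕ) (z : ℝ) : ℝ := ∑ q ∈ Finset.range (m + 1), Bq m q * z⁻¹ ^ q

/-- One-transit walk model partition function Z_n(z₁,z₂). -/
noncomputable def Zfull (n : ℕ) (z₁ z₂ : ℝ) : ℝ :=
  (z₁ * z₂) ^ n * ∑ p ∈ Finset.range (n + 1), Zt p z₁ * Zt (n - p) z₂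

/-- Probability of a contact above the axis at site 2i. -/
noncomputable def contactAbove (n i : ℕ) (z₁ z₂ : ℝ) : ℝ :=
  (z₁ * z₂) ^ i * Zt i z₁ * Zfull (n - i) z₁ z₂ / Zfull n z₁ z₂

/-- Probability of a contact below the axis at site 2i. -/
noncomputable def contactBelow (n i : ℕ) (z₁ z₂ : ℝ) : ℝ :=
  (z₁ * z₂) ^ (n - i) * Zfull i z₁ z₂ * Zt (n - i) z₂ / Zfull n z₁ z₂

lemma Bq_form (q r : ℕ) : Bq (q+1+r) (q+1) =
    ((q:ℝ)+1) * (q+2*r).factorial / (((q+1+r).factorial : ℝ) * r.factorial) := by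
  unfold Bq
  rw [if_neg (by omega), if_pos (by omega)]
  have e1 : 2 * (q+1+r) - (q+1) - 1 = q + 2*r := by omega
  have e2 : q+1+r-(q+1) = r := by omega
  rw [e1, e2]; push_cast; ring

lemma Bq_zero_right (m : ℕ) : Bq (m+1) 0 = 0 := by
  simp [Bq]

lemma Bq_gt {m q : ℕ} (h : m < q) : Bq m q = 0 := by
  unfold Bq
  split_ifs <;> first | omega | rfl

lemma Bq_nonneg (m q : ℕ) : 0 ≤ Bq m q := by
  unfold Bq
  split_ifs <;> positivity

lemma Bq_self (m : ℕ) : Bq m m = 1 := by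
  cases m with
  | zero => simp [Bq]
  | succ m =>
    have := Bq_form m 0
    simp only [add_zero, mul_zero, Nat.factorial_zero, Nat.cast_one, mul_one] at this
    rw [this, Nat.factorial_succ]
    have := Nat.factorial_pos m
    push_cast
    field_simp

lemma Bq_rec (m q : ℕ) : Bq (m+1) (q+1) = Bq (m+1) (q+2) + Bq m q := by
  rcases lt_trichotomy m q with h | h | h
  · rw [Bq_gt, Bq_gt, Bq_gt] <;> first | omega | simp
  · subst h
    rw [Bq_self, Bq_self, Bq_gt (by omega)]; simp
  · obtain ⟨r, rfl⟩ : ∃ r, m = q + 1 + r := ⟨m - (q+1), by omega⟩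
    have e1 := Bq_form q (r+1)
    have e2 := Bq_form (q+1) r
    rw [show q+1+r+1 = q+1+(r+1) by ring, e1, show q+1+(r+1) = q+1+1+r by ring, e2]
    cases q with
    | zero =>
      rw [show 0+1+r = r+1 by ring, Bq_zero_right]
      have e : 0 + 2*(r+1) = (0+1+2*r)+1 := by ring
      rw [e, Nat.factorial_succ (0+1+2*r), Nat.factorial_succ r]
      have := Nat.factorial_pos r
      have := Nat.factorial_pos (0+1+1+r)
      push_cast
      field_simp
      ring
    | succ q =>
      have e3 := Bq_form q (r+1)
      rw [show q+1+1+r = q+1+(r+1) by ring, e3]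
      rw [show q+1+1+1+r = (q+1+(r+1))+1 by ring, show q+1+2*(r+1) = (q+2*(r+1))+1 by ring,
        show q+1+1+2*r = q+2*(r+1) by ring, Nat.factorial_succ (q+1+(r+1)),
        Nat.factorial_succ (q+2*(r+1)), Nat.factorial_succ r]
      have := Nat.factorial_pos r
      have := Nat.factorial_pos (q+1+(r+1))
      push_cast
      field_simp
      ring

lemma Bq_half (m q : ℕ) : 2 * ((q:ℝ)+1) * Bq (m+1) (q+2) ≤ ((q:ℝ)+2) * Bq (m+1) (q+1) := by
  rcases le_or_gt (m+1) (q+1) with h | h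
  · rw [Bq_gt (show m+1 < q+2 by omega)]
    have := Bq_nonneg (m+1) (q+1)
    simp only [mul_zero]; positivity
  · obtain ⟨r, rfl⟩ : ∃ r, m = q + 1 + r := ⟨m - (q+1), by omega⟩
    have e1 := Bq_form q (r+1)
    have e2 := Bq_form (q+1) r
    rw [show q+1+r+1 = q+1+(r+1) by ring, e1, show q+1+(r+1) = q+1+1+r by ring, e2]
    rw [show q+2*(r+1) = (q+1+2*r)+1 by ring, Nat.factorial_succ (q+1+2*r), Nat.factorial_succ r]
    have := Nat.factorial_pos r
    have := Nat.factorial_pos (q+1+2*r)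
    have := Nat.factorial_pos (q+1+1+r)
    push_cast
    rw [← sub_nonneg]
    have : ((q:ℝ)+2) * (((q:ℝ)+1) * (((q:ℝ)+1+2*r+1) * (q+1+2*r).factorial) / ((q+1+1+r).factorial * (((r:ℝ)+1) * r.factorial))) - 2 * ((q:ℝ)+1) * (((q:ℝ)+1+1) * (q+1+2*r).factorial / ((q+1+1+r).factorial * r.factorial))
      = ((q:ℝ)+2) * ((q:ℝ)+1) * (q+1+2*r).factorial * q / ((q+1+1+r).factorial * (((r:ℝ)+1) * r.factorial)) := by
      field_simp
      ring
    rw [this]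
    positivity

lemma cat_real (m : ℕ) : (catalan m : ℝ) * ((m:ℝ)+1) = m.centralBinom := by
  rw [mul_comm]; exact_mod_cast succ_mul_catalan_eq_centralBinom m

lemma Bq_one (m : ℕ) : Bq (m+1) 1 = catalan m := by
  have e := Bq_form 0 m
  rw [show 0+1+m = m+1 by ring] at e
  simp only [zero_add] at e
  rw [e]
  have h := cat_real m
  have h2 : (m.centralBinom : ℝ) * m.factorial * m.factorial = (2*m).factorial := by
    have := Nat.choose_mul_factorial_mul_factorial (show m ≤ 2*m by omega)
    rw [show 2*m-m = m by omega] at this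
    rw [Nat.centralBinom_eq_two_mul_choose]
    exact_mod_cast this
  rw [← h2, ← h, Nat.factorial_succ]
  have := Nat.factorial_pos m
  push_cast
  field_simp
  ring

lemma Zt_zero (z : ℝ) : Zt 0 z = 1 := by simp [Zt, Bq]

lemma Zt_succ (m : ℕ) (z : ℝ) :
    Zt (m+1) z = ∑ q ∈ Finset.range (m+1), Bq (m+1) (q+1) * z⁻¹ ^ (q+1) := by
  unfold Zt
  rw [Finset.sum_range_succ', Bq_zero_right]; simp

lemma Zt_rec (m : ℕ) {z : ℝ} (hz : 0 < z) :
    (1 - z) * Zt (m+1) z = z⁻¹ * Zt m z - catalan m := by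
  have h1 : Zt (m+1) z = ∑ q ∈ Finset.range (m+1), Bq (m+1) (q+2) * z⁻¹ ^ (q+1) + z⁻¹ * Zt m z := by
    rw [Zt_succ]
    unfold Zt
    rw [Finset.mul_sum, ← Finset.sum_add_distrib]
    refine Finset.sum_congr rfl fun q _ => ?_
    rw [Bq_rec]; ring
  have h2 : Zt (m+1) z = ∑ q ∈ Finset.range (m+1), Bq (m+1) (q+2) * z⁻¹ ^ (q+2) + catalan m * z⁻¹ := by
    rw [Zt_succ, ← Bq_one]
    have : ∑ q ∈ Finset.range (m+2), Bq (m+1) (q+1) * z⁻¹ ^ (q+1) = ∑ q ∈ Finset.range (m+1), Bq (m+1) (q+1) * z⁻¹ ^ (q+1) := by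
      rw [Finset.sum_range_succ _ (m+1), Bq_gt (show m+1 < m+1+1 by omega)]; simp
    rw [← this, Finset.sum_range_succ']
    simp [add_assoc]
  have h3 : z * ∑ q ∈ Finset.range (m+1), Bq (m+1) (q+2) * z⁻¹ ^ (q+2) = ∑ q ∈ Finset.range (m+1), Bq (m+1) (q+2) * z⁻¹ ^ (q+1) := by
    rw [Finset.mul_sum]
    refine Finset.sum_congr rfl fun q _ => ?_
    rw [pow_succ _ (q+1)]; field_simp
  have h4 : z * z⁻¹ = 1 := by field_simp
  linear_combination h1 - z * h2 - h3 + (-catalan m : ℝ) * h4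

lemma Zt_nonneg (m : ℕ) {z : ℝ} (hz : 0 < z) : 0 ≤ Zt m z :=
  Finset.sum_nonneg fun q _ => mul_nonneg (Bq_nonneg _ _) (by positivity)

lemma Zt_anti (m : ℕ) {z w : ℝ} (hz : 0 < z) (h : z ≤ w) : Zt m w ≤ Zt m z := by
  unfold Zt
  gcongr with q
  · exact Bq_nonneg _ _
  · exact inv_nonneg.2 (hz.le.trans h)

/- Catalan facts -/
lemma cat_rat (m : ℕ) : (catalan (m+1) : ℝ) * (m+2) = 2 * (2*m+1) * catalan m := by
  have h1 := cat_real m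
  have h2 := cat_real (m+1)
  have h3 : ((m:ℝ)+1) * (m+1).centralBinom = 2 * (2*m+1) * m.centralBinom := by
    exact_mod_cast Nat.succ_mul_centralBinom_succ m
  push_cast at h2
  have : (m:ℝ)+1 ≠ 0 := by positivity
  apply mul_left_cancel₀ this
  rw [← h1, ← h2] at h3
  linear_combination h3

lemma cat_pos (m : ℕ) : (0:ℝ) < catalan m := by
  have h := cat_real m
  have : (0:ℝ) < m.centralBinom := by exact_mod_cast m.centralBinom_pos
  by_contra hc
  have : (catalan m : ℝ) * (m+1) ≤ 0 := mul_nonpos_of_nonpos_of_nonneg (not_lt.1 hc) (by positivity)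
  linarith

lemma cat_le (m : ℕ) : (catalan m : ℝ) ≤ catalan (m+1) := by
  have h := cat_rat m
  have hp := cat_pos m
  have hm : (0:ℝ) ≤ m := by positivity
  by_contra hc
  push Not at hc
  nlinarith [mul_nonneg hm hp.le]

lemma cat_le4 (m : ℕ) : (catalan (m+1) : ℝ) ≤ 4 * catalan m := by
  have h := cat_rat m
  have hp := cat_pos m
  have hm : (0:ℝ) ≤ m := by positivity
  by_contra hc
  push Not at hc
  nlinarith [mul_nonneg hm hp.le]

lemma cat_conv (n : ℕ) :
    (catalan (n+1) : ℝ) = ∑ p ∈ Finset.range (n+1), (catalan p : ℝ) * catalan (n-p) := by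
  rw [catalan_succ', Finset.Nat.sum_antidiagonal_eq_sum_range_succ_mk]
  push_cast; rfl

lemma cb_mul (i j : ℕ) : i.centralBinom * j.centralBinom ≤ (i+j).centralBinom := by
  rw [Nat.centralBinom_eq_two_mul_choose, Nat.centralBinom_eq_two_mul_choose,
    Nat.centralBinom_eq_two_mul_choose, mul_add, Nat.add_choose_eq]
  exact Finset.single_le_sum (f := fun ij : ℕ × ℕ => (2*i).choose ij.1 * (2*j).choose ij.2)
    (fun _ _ => Nat.zero_le _) (Finset.HasAntidiagonal.mem_antidiagonal.2 (rfl : (i,j).1 + (i,j).2 = i+j))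

lemma cat_ratio (i j : ℕ) : (catalan i : ℝ) * catalan j ≤
    (1/((i:ℝ)+1) + 1/((j:ℝ)+1)) * catalan (i+j) := by
  have h1 := cat_real i
  have h2 := cat_real j
  have h3 := cat_real (i+j)
  have h : (i.centralBinom : ℝ) * j.centralBinom ≤ (i+j).centralBinom := by exact_mod_cast cb_mul i j
  rw [← h1, ← h2, ← h3] at h
  push_cast at h
  have hc := cat_pos (i+j)
  rw [show (1/((i:ℝ)+1) + 1/((j:ℝ)+1)) * (catalan (i+j):ℝ) = ((i+j+2) * catalan (i+j)) / (((i:ℝ)+1)*((j:ℝ)+1)) by field_simp; ring, le_div_iff₀ (by positivity)]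
  nlinarith
/- z > 1/2 -/
lemma Bq_le (m q : ℕ) : Bq (m+1) (q+1) ≤ ((q:ℝ)+1) * (1/2)^q * catalan m := by
  induction q with
  | zero => simp [Bq_one]
  | succ q ih =>
    have h := Bq_half m q
    have h3 := mul_le_mul_of_nonneg_left ih (show (0:ℝ) ≤ q+2 by positivity)
    have : (0:ℝ) < 2*(q+1) := by positivity
    refine le_of_mul_le_mul_left ?_ this
    push_cast
    refine h.trans (h3.trans (le_of_eq ?_))
    rw [pow_succ]; ring

lemma Zt_upper {z : ℝ} (hz : 1/2 < z) : ∃ K : ℝ, 0 < K ∧ ∀ m, Zt m z ≤ K * catalan m := by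
  have hz0 : 0 < z := by linarith
  set r : ℝ := (2*z)⁻¹ with hr
  have hr0 : 0 < r := by positivity
  have hr1 : r < 1 := inv_lt_one_of_one_lt₀ (by linarith)
  have hs : Summable (fun q : ℕ => ((q:ℝ)+1) * r^q) := by
    have h1 := summable_pow_mul_geometric_of_norm_lt_one (R := ℝ) 1 (r := r)
      (by rw [Real.norm_eq_abs, abs_of_pos hr0]; exact hr1)
    have h2 := summable_geometric_of_lt_one hr0.le hr1
    refine (h1.add h2).congr fun q => by simp; ring
  refine ⟨1 + z⁻¹ * ∑' q : ℕ, ((q:ℝ)+1) * r^q, ?_, ?_⟩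
  · have : 0 ≤ ∑' q : ℕ, ((q:ℝ)+1) * r^q := tsum_nonneg fun q => by positivity
    positivity
  · intro m
    have ht : 0 ≤ ∑' q : ℕ, ((q:ℝ)+1) * r^q := tsum_nonneg fun q => by positivity
    cases m with
    | zero => rw [Zt_zero]; simp; positivity
    | succ m =>
      have h1 : Zt (m+1) z ≤ (z⁻¹ * ∑' q : ℕ, ((q:ℝ)+1) * r^q) * catalan m := by
        rw [Zt_succ]
        calc _ ≤ ∑ q ∈ Finset.range (m+1), (z⁻¹ * catalan m) * (((q:ℝ)+1) * r^q) := by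
              refine Finset.sum_le_sum fun q _ => ?_
              refine (mul_le_mul_of_nonneg_right (Bq_le m q) (by positivity)).trans (le_of_eq ?_)
              rw [hr, mul_inv, mul_pow, pow_succ, one_div]; ring
          _ = (z⁻¹ * catalan m) * ∑ q ∈ Finset.range (m+1), (((q:ℝ)+1) * r^q) := by
              rw [Finset.mul_sum]
          _ ≤ (z⁻¹ * catalan m) * ∑' q : ℕ, ((q:ℝ)+1) * r^q := by
              gcongr
              exact hs.sum_le_tsum _ fun q _ => by positivity
          _ = _ := by ring
      refine h1.trans ?_
      have := cat_pos (m+1)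
      have h2 := mul_le_mul_of_nonneg_left (cat_le m) (show 0 ≤ z⁻¹ * ∑' q : ℕ, ((q:ℝ)+1) * r^q by positivity)
      linarith

lemma Zt_lower {z : ℝ} (hz : 0 < z) : ∃ c : ℝ, 0 < c ∧ ∀ m, c * catalan m ≤ Zt m z := by
  refine ⟨min 1 (z⁻¹/4), by positivity, fun m => ?_⟩
  cases m with
  | zero => rw [Zt_zero]; simp
  | succ m =>
    have h1 : (catalan m : ℝ) * z⁻¹ ≤ Zt (m+1) z := by
      rw [Zt_succ, ← Bq_one]
      have := Finset.single_le_sum (s := Finset.range (m+1)) (f := fun q => Bq (m+1) (q+1) * z⁻¹ ^ (q+1))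
        (fun q _ => mul_nonneg (Bq_nonneg _ _) (by positivity)) (Finset.mem_range.2 (Nat.succ_pos m))
      simpa using this
    have h2 : min 1 (z⁻¹/4) * (catalan (m+1) : ℝ) ≤ (z⁻¹/4) * (4 * catalan m) := by
      gcongr
      · exact min_le_right _ _
      · exact cat_le4 m
    linarith

noncomputable def SS (n : ℕ) (z₁ z₂ : ℝ) : ℝ := ∑ p ∈ Finset.range (n + 1), Zt p z₁ * Zt (n - p) z₂

lemma SS_symm (n : ℕ) (z₁ z₂ : ℝ) : SS n z₁ z₂ = SS n z₂ z₁ := by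
  unfold SS
  rw [← Finset.sum_range_reflect]
  refine Finset.sum_congr rfl fun p hp => ?_
  have := Finset.mem_range.1 hp
  rw [show n + 1 - 1 - p = n - p by omega, show n - (n-p) = p by omega, mul_comm]

lemma SS_lower (n : ℕ) {z₁ z₂ : ℝ} (h1 : 0 < z₁) (h2 : 0 < z₂) : Zt n z₁ ≤ SS n z₁ z₂ := by
  have := Finset.single_le_sum (s := Finset.range (n+1)) (f := fun p => Zt p z₁ * Zt (n - p) z₂)
        (fun q _ => mul_nonneg (Zt_nonneg _ h1) (Zt_nonneg _ h2)) (Finset.mem_range.2 (Nat.lt_succ_self n))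
  simpa [SS, Zt_zero] using this

lemma Zt_pos (m : ℕ) {z : ℝ} (hz : 0 < z) : 0 < Zt m z := by
  obtain ⟨c, hc, h⟩ := Zt_lower hz
  exact lt_of_lt_of_le (mul_pos hc (cat_pos m)) (h m)

lemma SS_pos (n : ℕ) {z₁ z₂ : ℝ} (h1 : 0 < z₁) (h2 : 0 < z₂) : 0 < SS n z₁ z₂ :=
  lt_of_lt_of_le (Zt_pos n h1) (SS_lower n h1 h2)

lemma phase1 {z₁ z₂ : ℝ} (h1 : 1/2 < z₁) (h2 : 1/2 < z₂) {i j : ℕ → ℕ}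
    (hi : Tendsto i atTop atTop) (hj : Tendsto j atTop atTop) :
    Tendsto (fun n => Zt (i n) z₁ * SS (j n) z₁ z₂ / SS (i n + j n) z₁ z₂) atTop (nhds 0) := by
  have p1 : 0 < z₁ := by linarith
  have p2 : 0 < z₂ := by linarith
  obtain ⟨K, hK, hKu⟩ := Zt_upper h1
  obtain ⟨L, hL, hLu⟩ := Zt_upper h2
  obtain ⟨c, hc, hcl⟩ := Zt_lower p1
  have hS : ∀ n, SS n z₁ z₂ ≤ K * L * 4 * catalan n := by
    intro n
    have : SS n z₁ z₂ ≤ ∑ p ∈ Finset.range (n+1), (K * L) * ((catalan p : ℝ) * catalan (n-p)) := by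
      refine Finset.sum_le_sum fun p _ => ?_
      refine (mul_le_mul (hKu p) (hLu (n-p)) (Zt_nonneg _ p2) (mul_nonneg hK.le (cat_pos p).le)).trans (le_of_eq ?_)
      ring
    rw [← Finset.mul_sum, ← cat_conv] at this
    have h4 := mul_le_mul_of_nonneg_left (cat_le4 n) (mul_pos hK hL).le
    linarith
  have key : ∀ a b : ℕ, Zt a z₁ * SS b z₁ z₂ / SS (a+b) z₁ z₂ ≤
      (K * (K * L * 4) / c) * (1/((a:ℝ)+1) + 1/((b:ℝ)+1)) := by
    intro a b
    rw [div_le_iff₀ (SS_pos _ p1 p2)]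
    have e1 : Zt a z₁ * SS b z₁ z₂ ≤ (K * catalan a) * (K * L * 4 * catalan b) :=
      mul_le_mul (hKu a) (hS b) (SS_pos _ p1 p2).le (mul_nonneg hK.le (cat_pos a).le)
    have e2 := cat_ratio a b
    have e3 := (hcl (a+b)).trans (SS_lower (a+b) p1 p2)
    calc _ ≤ (K * (K * L * 4)) * ((catalan a : ℝ) * catalan b) := by linarith
      _ ≤ (K * (K * L * 4)) * ((1/((a:ℝ)+1) + 1/((b:ℝ)+1)) * catalan (a+b)) := by gcongr
      _ = (K * (K * L * 4) / c) * (1/((a:ℝ)+1) + 1/((b:ℝ)+1)) * (c * catalan (a+b)) := by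
          field_simp
      _ ≤ _ := by gcongr
  have t0 : Tendsto (fun n : ℕ => 1/((n:ℝ)+1)) atTop (nhds 0) := tendsto_one_div_add_atTop_nhds_zero_nat
  have t1 := ((t0.comp hi).add (t0.comp hj)).const_mul (K * (K * L * 4) / c)
  simp only [add_zero, mul_zero] at t1
  refine squeeze_zero (fun n => ?_) (fun n => key (i n) (j n)) t1
  exact div_nonneg (mul_nonneg (Zt_nonneg _ p1) (SS_pos _ p1 p2).le) (SS_pos _ p1 p2).le
/- z < 1/2 -/
lemma cat_partial {z : ℝ} (hz : 0 < z) (hz2 : z < 1/2) (N : ℕ) :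
    ∑ k ∈ Finset.range N, (catalan k : ℝ) * (z*(1-z))^k ≤ 1/(1-z) := by
  have hz1 : 0 < 1 - z := by linarith
  have hw : 0 < z*(1-z) := by positivity
  set w := z*(1-z) with hwd
  induction N with
  | zero => simp; linarith
  | succ N ih =>
    rw [Finset.sum_range_succ']
    have h0 : 0 ≤ ∑ k ∈ Finset.range N, (catalan k : ℝ) * w^k :=
      Finset.sum_nonneg fun k _ => by positivity
    have h1 : ∑ k ∈ Finset.range N, (catalan (k+1) : ℝ) * w^(k+1) ≤
        w * (∑ k ∈ Finset.range N, (catalan k : ℝ) * w^k)^2 := by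
      rw [sq, Finset.sum_mul_sum, ← Finset.sum_product', Finset.mul_sum]
      have : ∀ k, (catalan (k+1) : ℝ) * w^(k+1) = ∑ p ∈ Finset.HasAntidiagonal.antidiagonal k,
          w * (((catalan p.1 : ℝ) * w^p.1) * ((catalan p.2 : ℝ) * w^p.2)) := by
        intro k
        rw [catalan_succ']
        push_cast
        rw [Finset.sum_mul]
        refine Finset.sum_congr rfl fun p hp => ?_
        rw [← Finset.HasAntidiagonal.mem_antidiagonal.1 hp, pow_succ, pow_add]; ring
      simp_rw [this]
      rw [← Finset.sum_biUnion]
      · refine Finset.sum_le_sum_of_subset_of_nonneg ?_ fun p _ _ => by positivity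
        intro p hp
        obtain ⟨k, hk, hp⟩ := Finset.mem_biUnion.1 hp
        have hp := Finset.HasAntidiagonal.mem_antidiagonal.1 hp
        have hk := Finset.mem_range.1 hk
        rw [Finset.mem_product, Finset.mem_range, Finset.mem_range]
        omega
      · intro k _ l _ hkl
        rw [Function.onFun, Finset.disjoint_left]
        intro p hp hp2
        rw [Finset.HasAntidiagonal.mem_antidiagonal] at hp hp2
        omega
    have h2 : (∑ k ∈ Finset.range N, (catalan k : ℝ) * w^k)^2 ≤ (1/(1-z))^2 := by gcongr
    have h3 := mul_le_mul_of_nonneg_left h2 hw.le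
    have h4 : w * (1/(1-z))^2 + 1 = 1/(1-z) := by rw [hwd]; field_simp; ring
    simp only [catalan_zero, Nat.cast_one, pow_zero, mul_one]
    linarith

lemma cat_hasSum {z : ℝ} (hz : 0 < z) (hz2 : z < 1/2) :
    HasSum (fun k => (catalan k : ℝ) * (z*(1-z))^k) (1/(1-z)) := by
  have hz1 : 0 < 1 - z := by linarith
  have hw : 0 < z*(1-z) := by positivity
  have hnn : ∀ k, 0 ≤ (catalan k : ℝ) * (z*(1-z))^k := fun k => by positivity
  have hs : Summable (fun k => (catalan k : ℝ) * (z*(1-z))^k) :=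
    summable_of_sum_range_le hnn (cat_partial hz hz2)
  have hle : ∑' k, (catalan k : ℝ) * (z*(1-z))^k ≤ 1/(1-z) :=
    Real.tsum_le_of_sum_range_le hnn (cat_partial hz hz2)
  have hq : ∑' k, (catalan k : ℝ) * (z*(1-z))^k =
      1 + (z*(1-z)) * (∑' k, (catalan k : ℝ) * (z*(1-z))^k)^2 := by
    conv_lhs => rw [hs.tsum_eq_zero_add]
    have hn : Summable (fun k => ‖(catalan k : ℝ) * (z*(1-z))^k‖) := hs.norm
    rw [sq, tsum_mul_tsum_eq_tsum_sum_antidiagonal_of_summable_norm hn hn, ← tsum_mul_left]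
    simp only [catalan_zero, Nat.cast_one, pow_zero, mul_one]
    congr 1
    refine tsum_congr fun k => ?_
    rw [catalan_succ']
    push_cast
    rw [Finset.sum_mul, Finset.mul_sum]
    refine Finset.sum_congr rfl fun p hp => ?_
    rw [← Finset.HasAntidiagonal.mem_antidiagonal.1 hp, pow_succ, pow_add]; ring
  set F := ∑' k, (catalan k : ℝ) * (z*(1-z))^k with hF
  have hFe : F = 1/(1-z) := by
    have h1 : (z*F-1) * ((1-z)*F-1) = 0 := by linear_combination -hq
    rcases mul_eq_zero.1 h1 with h | h
    · exfalso
      rw [le_div_iff₀ hz1] at hle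
      have hF0 : 0 ≤ F := tsum_nonneg hnn
      nlinarith
    · field_simp; linarith
  rw [← hFe]; exact hs.hasSum

lemma u_form {z : ℝ} (hz : 0 < z) (hz2 : z < 1/2) (m : ℕ) :
    Zt m z * (z*(1-z))^m = 1 - z * ∑ k ∈ Finset.range m, (catalan k : ℝ) * (z*(1-z))^k := by
  induction m with
  | zero => simp [Zt_zero]
  | succ m ih =>
    have h := Zt_rec m hz
    rw [Finset.sum_range_succ, pow_succ]
    have h4 : z * z⁻¹ = 1 := by field_simp
    linear_combination (z * (z*(1-z))^m) * h + ih + (Zt m z * (z*(1-z))^m) * h4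

lemma u_lim {z : ℝ} (hz : 0 < z) (hz2 : z < 1/2) :
    Tendsto (fun m => Zt m z * (z*(1-z))^m) atTop (nhds ((1-2*z)/(1-z))) := by
  simp_rw [u_form hz hz2]
  have h := ((cat_hasSum hz hz2).tendsto_sum_nat.const_mul z).const_sub 1
  have hz1 : 1 - z ≠ 0 := by linarith
  convert h using 2
  field_simp; ring

lemma u_le {z : ℝ} (hz : 0 < z) (hz2 : z < 1/2) (m : ℕ) : Zt m z * (z*(1-z))^m ≤ 1 := by
  rw [u_form hz hz2]
  have hz1 : 0 < 1 - z := by linarith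
  have : 0 ≤ ∑ k ∈ Finset.range m, (catalan k : ℝ) * (z*(1-z))^k :=
    Finset.sum_nonneg fun k _ => by positivity
  nlinarith

lemma b_summable {z₁ z₂ : ℝ} (h1 : 0 < z₁) (h12 : z₁ < 1/2) (h : z₁ < z₂) :
    Summable (fun m => Zt m z₂ * (z₁*(1-z₁))^m) := by
  obtain ⟨v, hv1, hv2⟩ := exists_between (lt_min h h12)
  have hv3 := hv2.trans_le (min_le_left _ _)
  have hv4 := hv2.trans_le (min_le_right _ _)
  have hv0 := h1.trans hv1
  have hw : 0 < v*(1-v) := mul_pos hv0 (by linarith)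
  have hw1 : 0 < z₁*(1-z₁) := mul_pos h1 (by linarith)
  have hlt : z₁*(1-z₁) < v*(1-v) := by nlinarith
  have hg := summable_geometric_of_lt_one (r := (z₁*(1-z₁))/(v*(1-v))) (by positivity)
    ((div_lt_one hw).2 hlt)
  refine Summable.of_nonneg_of_le (fun m => mul_nonneg (Zt_nonneg _ (h1.trans h)) (by positivity)) (fun m => ?_) hg
  rw [div_pow, le_div_iff₀ (by positivity)]
  have e1 := Zt_anti m hv0 hv3.le
  have e2 := u_le hv0 hv4 m
  have e3 : Zt m z₂ * (v*(1-v))^m ≤ 1 := (mul_le_mul_of_nonneg_right e1 (by positivity)).trans e2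
  have := mul_le_mul_of_nonneg_right e3 (show 0 ≤ (z₁*(1-z₁))^m by positivity)
  linarith

lemma conv_lim {z₁ z₂ : ℝ} (h1 : 0 < z₁) (h12 : z₁ < 1/2) (h : z₁ < z₂) :
    ∃ B : ℝ, B ≠ 0 ∧ Tendsto (fun n => SS n z₁ z₂ * (z₁*(1-z₁))^n) atTop (nhds B) := by
  have hw1 : 0 < z₁*(1-z₁) := mul_pos h1 (by linarith)
  have hb := b_summable h1 h12 h
  have hbn : ∀ m, 0 ≤ Zt m z₂ * (z₁*(1-z₁))^m := fun m => mul_nonneg (Zt_nonneg _ (h1.trans h)) (by positivity)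
  refine ⟨∑' k, (Zt k z₂ * (z₁*(1-z₁))^k) * ((1-2*z₁)/(1-z₁)), ?_, ?_⟩
  · rw [tsum_mul_right]
    have e1 : 0 < (1-2*z₁)/(1-z₁) := div_pos (by linarith) (by linarith)
    have e2 : 0 < ∑' k, (Zt k z₂ * (z₁*(1-z₁))^k) :=
      hb.tsum_pos hbn 0 (by simp [Zt_zero])
    positivity
  · have key : ∀ n, SS n z₁ z₂ * (z₁*(1-z₁))^n = ∑' k, if k ∈ Finset.range (n+1) then
        (Zt k z₂ * (z₁*(1-z₁))^k) * (Zt (n-k) z₁ * (z₁*(1-z₁))^(n-k)) else 0 := by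
      intro n
      rw [tsum_eq_sum (s := Finset.range (n+1)) (fun k hk => if_neg hk), SS_symm, SS, Finset.sum_mul]
      refine Finset.sum_congr rfl fun k hk => ?_
      rw [if_pos hk]
      have hk' := Finset.mem_range.1 hk
      have : (z₁*(1-z₁))^n = (z₁*(1-z₁))^k * (z₁*(1-z₁))^(n-k) := by
        rw [← pow_add]; congr 1; omega
      rw [this]; ring
    simp_rw [key]
    refine tendsto_tsum_of_dominated_convergence hb (fun k => ?_) (Eventually.of_forall fun n k => ?_)
    · have t := ((u_lim h1 h12).comp (tendsto_sub_atTop_nat k)).const_mul (Zt k z₂ * (z₁*(1-z₁))^k)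
      refine t.congr' ?_
      filter_upwards [eventually_ge_atTop k] with n hn
      rw [if_pos (Finset.mem_range.2 (by omega))]
      rfl
    · split_ifs
      · rw [Real.norm_of_nonneg (mul_nonneg (hbn k) (mul_nonneg (Zt_nonneg _ h1) (by positivity)))]
        exact mul_le_of_le_one_right (hbn k) (u_le h1 h12 _)
      · simpa using hbn k

lemma phase2a {z₁ z₂ : ℝ} (h1 : 0 < z₁) (h12 : z₁ < 1/2) (h : z₁ < z₂) {i j : ℕ → ℕ}
    (hi : Tendsto i atTop atTop) (hj : Tendsto j atTop atTop) :
    Tendsto (fun n => Zt (i n) z₁ * SS (j n) z₁ z₂ / SS (i n + j n) z₁ z₂) atTop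
      (nhds ((1-2*z₁)/(1-z₁))) := by
  obtain ⟨B, hB, hl⟩ := conv_lim h1 h12 h
  have hw1 : 0 < z₁*(1-z₁) := mul_pos h1 (by linarith)
  have t := (((u_lim h1 h12).comp hi).mul (hl.comp hj)).div (hl.comp (hi.atTop_add_atTop hj)) hB
  rw [mul_div_assoc, div_self hB, mul_one] at t
  refine t.congr fun n => ?_
  simp only [Function.comp, Pi.mul_apply, Pi.div_apply]
  rw [pow_add]
  have := SS_pos (i n + j n) h1 (h1.trans h)
  have : 0 < (z₁*(1-z₁))^(i n) := by positivity
  have : 0 < (z₁*(1-z₁))^(j n) := by positivity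
  generalize (z₁*(1-z₁))^(i n) = A at *
  generalize (z₁*(1-z₁))^(j n) = A' at *
  field_simp

lemma phase2b {z₁ z₂ : ℝ} (h1 : 0 < z₁) (h12 : z₁ < 1/2) (h : z₁ < z₂) {i j : ℕ → ℕ}
    (hi : Tendsto i atTop atTop) (hj : Tendsto j atTop atTop) :
    Tendsto (fun n => SS (i n) z₁ z₂ * Zt (j n) z₂ / SS (i n + j n) z₁ z₂) atTop (nhds 0) := by
  obtain ⟨B, hB, hl⟩ := conv_lim h1 h12 h
  have hw1 : 0 < z₁*(1-z₁) := mul_pos h1 (by linarith)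
  have t := ((hl.comp hi).mul ((b_summable h1 h12 h).tendsto_atTop_zero.comp hj)).div
    (hl.comp (hi.atTop_add_atTop hj)) hB
  rw [mul_zero, zero_div] at t
  refine t.congr fun n => ?_
  simp only [Function.comp, Pi.mul_apply, Pi.div_apply]
  rw [pow_add]
  have := SS_pos (i n + j n) h1 (h1.trans h)
  have : 0 < (z₁*(1-z₁))^(i n) := by positivity
  have : 0 < (z₁*(1-z₁))^(j n) := by positivity
  generalize (z₁*(1-z₁))^(i n) = A at *
  generalize (z₁*(1-z₁))^(j n) = A' at *
  field_simp

lemma above_eq (i j : ℕ) {z₁ z₂ : ℝ} (h1 : 0 < z₁) (h2 : 0 < z₂) :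
    contactAbove (i+j) i z₁ z₂ = Zt i z₁ * SS j z₁ z₂ / SS (i+j) z₁ z₂ := by
  unfold contactAbove Zfull
  rw [Nat.add_sub_cancel_left]
  change _ * _ * (_ * SS j z₁ z₂) / (_ * SS (i+j) z₁ z₂) = _
  have := SS_pos (i + j) h1 h2
  rw [pow_add]
  have : 0 < (z₁*z₂)^i := by positivity
  have : 0 < (z₁*z₂)^j := by positivity
  generalize (z₁*z₂)^i = A at *
  generalize (z₁*z₂)^j = A' at *
  field_simp

lemma below_eq (i j : ℕ) {z₁ z₂ : ℝ} (h1 : 0 < z₁) (h2 : 0 < z₂) :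
    contactBelow (i+j) i z₁ z₂ = SS i z₁ z₂ * Zt j z₂ / SS (i+j) z₁ z₂ := by
  unfold contactBelow Zfull
  rw [Nat.add_sub_cancel_left]
  change _ * (_ * SS i z₁ z₂) * _ / (_ * SS (i+j) z₁ z₂) = _
  have := SS_pos (i + j) h1 h2
  rw [pow_add]
  have : 0 < (z₁*z₂)^i := by positivity
  have : 0 < (z₁*z₂)^j := by positivity
  generalize (z₁*z₂)^i = A at *
  generalize (z₁*z₂)^j = A' at *
  field_simp

/-- In the thermodynamic limit with i = ⌊xn⌋, the local contact probabilities
(⟨â_x⟩, ⟨b̂_x⟩) converge to (0,0), (ρ(z₁),0) or (0,ρ(z₂)) in the three phases,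
where ρ(z) = (1-2z)/(1-z). -/
theorem local_contact_probabilities (z₁ z₂ x : ℝ) (h1 : 0 < z₁) (h2 : 0 < z₂)
    (hx0 : 0 < x) (hx1 : x < 1) :
    (1 / 2 < z₁ → 1 / 2 < z₂ →
      Tendsto (fun n : ℕ => contactAbove n ⌊x * n⌋₊ z₁ z₂) atTop (nhds 0) ∧
      Tendsto (fun n : ℕ => contactBelow n ⌊x * n⌋₊ z₁ z₂) atTop (nhds 0)) ∧
    (z₁ < 1 / 2 → z₁ < z₂ →
      Tendsto (fun n : ℕ => contactAbove n ⌊x * n⌋₊ z₁ z₂) atTop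
        (nhds ((1 - 2 * z₁) / (1 - z₁))) ∧
      Tendsto (fun n : ℕ => contactBelow n ⌊x * n⌋₊ z₁ z₂) atTop (nhds 0)) ∧
    (z₂ < 1 / 2 → z₂ < z₁ →
      Tendsto (fun n : ℕ => contactAbove n ⌊x * n⌋₊ z₁ z₂) atTop (nhds 0) ∧
      Tendsto (fun n : ℕ => contactBelow n ⌊x * n⌋₊ z₁ z₂) atTop
        (nhds ((1 - 2 * z₂) / (1 - z₂)))) := by
  have hfl : ∀ n : ℕ, ⌊x * n⌋₊ ≤ n := fun n => by
    have : x * n ≤ n := mul_le_of_le_one_left (by positivity) hx1.le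
    exact Nat.floor_le_of_le this
  set i : ℕ → ℕ := fun n => ⌊x * n⌋₊ with hidef
  set j : ℕ → ℕ := fun n => n - ⌊x * n⌋₊ with hjdef
  have hij : ∀ n, i n + j n = n := fun n => by
    have := hfl n
    simp only [hidef, hjdef]; omega
  have hi : Tendsto i atTop atTop :=
    tendsto_nat_floor_atTop.comp (tendsto_natCast_atTop_atTop.const_mul_atTop hx0)
  have hj : Tendsto j atTop atTop := by
    have ht : Tendsto (fun n : ℕ => ((1 - x) * (n:ℝ))) atTop atTop :=
      tendsto_natCast_atTop_atTop.const_mul_atTop (by linarith)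
    rw [← tendsto_natCast_atTop_iff (R := ℝ)]
    refine tendsto_atTop_mono (fun n => ?_) ht
    simp only [hjdef]
    rw [Nat.cast_sub (hfl n)]
    have := Nat.floor_le (show 0 ≤ x * (n:ℝ) by positivity)
    linarith
  have eA : (fun n : ℕ => contactAbove n ⌊x * n⌋₊ z₁ z₂) =
      fun n => Zt (i n) z₁ * SS (j n) z₁ z₂ / SS (i n + j n) z₁ z₂ := by
    funext n
    rw [← above_eq (i n) (j n) h1 h2, hij]
  have eB : (fun n : ℕ => contactBelow n ⌊x * n⌋₊ z₁ z₂) =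
      fun n => SS (i n) z₁ z₂ * Zt (j n) z₂ / SS (i n + j n) z₁ z₂ := by
    funext n
    rw [← below_eq (i n) (j n) h1 h2, hij]
  have eA' : (fun n : ℕ => contactAbove n ⌊x * n⌋₊ z₁ z₂) =
      fun n => SS (j n) z₂ z₁ * Zt (i n) z₁ / SS (j n + i n) z₂ z₁ := by
    rw [eA]; funext n
    rw [SS_symm _ z₂, SS_symm _ z₂, mul_comm, add_comm]
  have eB' : (fun n : ℕ => contactBelow n ⌊x * n⌋₊ z₁ z₂) =
      fun n => Zt (j n) z₂ * SS (i n) z₂ z₁ / SS (j n + i n) z₂ z₁ := by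
    rw [eB]; funext n
    rw [SS_symm _ z₂, SS_symm _ z₂, mul_comm, add_comm]
  refine ⟨fun a b => ⟨?_, ?_⟩, fun a b => ⟨?_, ?_⟩, fun a b => ⟨?_, ?_⟩⟩
  · rw [eA]; exact phase1 a b hi hj
  · rw [eB']; exact phase1 b a hj hi
  · rw [eA]; exact phase2a h1 a b hi hj
  · rw [eB]; exact phase2b h1 a b hi hj
  · rw [eA']; exact phase2b h2 a b hj hi
  · rw [eB']; exact phase2a h2 a b hj hi
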